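/- arXiv:1708.04579 — 3 statements merged into one kernel-verified Lean document; each statement's English description precedes it below -/
import Mathlib

section
/- (Proximity theorem) Let f : ℤⁿ → ℝ ∪ {+∞} be a globally or locally discrete midpoint convex function, let α be a positive integer, and let x^α ∈ dom f. If f(x^α) ≤ f(x^α + αd) for all d ∈ {−1, 0, +1}ⁿ, then there exists a global minimizer x* ∈ ℤⁿ of f with ‖x^α − x*‖∞ ≤ n(α − 1). -/
/-- The ℓ∞-norm of an integer vector, as a natural number. -/
def linf {n : ℕ} (z : Fin n → ℤ) : ℕ :=
  Finset.univ.sup fun i => (z i).natAbs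

/-- Componentwise round-up of (x+y)/2. -/
def avgUp {n : ℕ} (x y : Fin n → ℤ) : Fin n → ℤ :=
  fun i => ⌈((x i + y i : ℚ)) / 2⌉

/-- Componentwise round-down of (x+y)/2. -/
def avgDown {n : ℕ} (x y : Fin n → ℤ) : Fin n → ℤ :=
  fun i => ⌊((x i + y i : ℚ)) / 2⌋

/-- A set `S ⊆ ℤⁿ` is discrete midpoint convex. -/
def DMCSet {n : ℕ} (S : Set (Fin n → ℤ)) : Prop :=
  ∀ ⦃x⦄, x ∈ S → ∀ ⦃y⦄, y ∈ S → 2 ≤ linf (x - y) →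
    avgUp x y ∈ S ∧ avgDown x y ∈ S

/-- `f` satisfies discrete midpoint convexity for the pair `(x, y)`.
Values are in `ℝ ∪ {+∞}`, modeled as `WithTop ℝ`. -/
def DMCPair {n : ℕ} (f : (Fin n → ℤ) → WithTop ℝ) (x y : Fin n → ℤ) : Prop :=
  f (avgUp x y) + f (avgDown x y) ≤ f x + f y

/-- `f` is globally discrete midpoint convex. -/
def GloballyDMC {n : ℕ} (f : (Fin n → ℤ) → WithTop ℝ) : Prop :=
  ∀ x y : Fin n → ℤ, 2 ≤ linf (x - y) → DMCPair f x y

/-- The effective domain of `f`. -/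
def effDom {n : ℕ} (f : (Fin n → ℤ) → WithTop ℝ) : Set (Fin n → ℤ) :=
  {x | f x ≠ ⊤}

/-- `f` is locally discrete midpoint convex. -/
def LocallyDMC {n : ℕ} (f : (Fin n → ℤ) → WithTop ℝ) : Prop :=
  DMCSet (effDom f) ∧ ∀ x y : Fin n → ℤ, linf (x - y) = 2 → DMCPair f x y

/-!
Split `v = y - x` as evenly as possible into `m = ‖v‖∞` integer vectors, the parts `⌊(v + j) / m⌋`
with `0 ≤ j < m`. The sum of any `k` of these parts has norm `k`, and its own even split consists
of exactly these parts; for `k = 2` they lead to the two rounded midpoints. Hence discrete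
midpoint convexity at distance two is local supermodularity of `f` on the partial sums of the
split. It implies supermodularity, which is the parallelogram inequality
`f (x + s) + f (y - s) ≤ f x + f y` for every partial sum `s`. The parts form a chain with at most
`n` distinct members, so if `m > n (α - 1)` then some part `d` occurs `α` times. Taking `s = α d`,
local optimality of `x` yields `f (y - α d) ≤ f y`, and `y - α d` is closer to `x` than `y`.
-/

section EvenSplit

variable {ι : Type*}

/-- The `j`-th part of `v` when it is split as evenly as possible into `m` integer vectors, in
increasing order. In the paper's notation for `m = ‖v‖∞`, this is `𝟙_A - 𝟙_B` with
`A = {i | m - j ≤ v i}` and `B = {i | v i ≤ -(j + 1)}`. -/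
def evenPart (m : ℕ) (v : ι → ℤ) (j : ℕ) : ι → ℤ :=
  fun i => (v i + j) / m

/-- The `m` parts of `v` when it is split as evenly as possible into integer vectors. They are kept
in a multiset because then the parts of a sub-sum form a sub-multiset of the split. The parts sum
to `v` unless `m = 0`, where there are none. -/
def evenSplit (m : ℕ) (v : ι → ℤ) : Multiset (ι → ℤ) :=
  (Finset.univ : Finset (Fin m)).val.map fun j : Fin m => evenPart m v j

theorem mem_evenSplit {m : ℕ} {v d : ι → ℤ} :
    d ∈ evenSplit m v ↔ ∃ j < m, evenPart m v j = d := by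
  simp [evenSplit, Fin.exists_iff]

theorem evenPart_mem_evenSplit {m j : ℕ} (hj : j < m) (v : ι → ℤ) :
    evenPart m v j ∈ evenSplit m v :=
  mem_evenSplit.2 ⟨j, hj, rfl⟩

theorem card_evenSplit (m : ℕ) (v : ι → ℤ) : (evenSplit m v).card = m := by
  simp [evenSplit]

theorem evenSplit_zero (v : ι → ℤ) : evenSplit 0 v = 0 := rfl

theorem evenSplit_one (v : ι → ℤ) : evenSplit 1 v = {v} := by
  have h : evenPart 1 v 0 = v := funext fun i => by simp [evenPart]
  simp [evenSplit, h]

theorem evenSplit_two (v : ι → ℤ) : evenSplit 2 v = {evenPart 2 v 0, evenPart 2 v 1} := by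
  simp [evenSplit, Fin.univ_succ]

theorem pair_le_evenSplit {m j k : ℕ} (hj : j < m) (hk : k < m) (hjk : j ≠ k) (v : ι → ℤ) :
    {evenPart m v j, evenPart m v k} ≤ evenSplit m v := by
  have hne : (⟨j, hj⟩ : Fin m) ≠ ⟨k, hk⟩ := by simpa using hjk
  simpa [evenSplit, Finset.insert_val_of_notMem, hne] using Multiset.map_le_map
    (f := fun j : Fin m => evenPart m v j)
    (Finset.val_le_iff.2 (Finset.subset_univ {⟨j, hj⟩, ⟨k, hk⟩}))

theorem evenPart_mono (m : ℕ) (v : ι → ℤ) : Monotone (evenPart m v) := fun j k hjk i => by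
  obtain rfl | hm := m.eq_zero_or_pos
  · simp [evenPart]
  · exact Int.ediv_le_ediv (by exact_mod_cast hm) (by omega)

theorem evenPart_le_add_one {m j : ℕ} (hj : j < m) (v : ι → ℤ) :
    evenPart m v j ≤ evenPart m v 0 + 1 := fun i => by
  calc (v i + j) / m ≤ (v i + (0 : ℕ) + 1 * m) / m := Int.ediv_le_ediv (by omega) (by omega)
    _ = (v i + (0 : ℕ)) / m + 1 := Int.add_mul_ediv_right _ _ (by omega)

theorem evenPart_evenPart (p q : ℕ) (v : ι → ℤ) (j k : ℕ) (hq : q ≠ 0) :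
    evenPart p (evenPart q v j) k = evenPart (q * p) v (j + q * k) := by
  funext i
  have hq' : (q : ℤ) ≠ 0 := by exact_mod_cast hq
  simp only [evenPart]
  push_cast
  rw [← Int.add_mul_ediv_left _ _ hq', Int.ediv_ediv_of_nonneg (by positivity), add_assoc]

/-- The two cases are the parts before and after the removed part `j`. -/
theorem sub_ediv_add_ediv {m j k l : ℤ} (hj : 0 ≤ j) (hjm : j ≤ m) (hk : 0 ≤ k) (hkm : k < m)
    (hl : k < j ∧ l = k ∨ j ≤ k ∧ l = k + 1) (v : ℤ) :
    (v - (v + j) / (m + 1) + k) / m = (v + l) / (m + 1) := by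
  obtain ⟨hq, hq'⟩ := (Int.ediv_eq_iff_of_pos (show 0 < m + 1 by omega)).1
    (rfl : (v + j) / (m + 1) = _)
  obtain ⟨ha, ha'⟩ := (Int.ediv_eq_iff_of_pos (show 0 < m + 1 by omega)).1
    (rfl : (v + l) / (m + 1) = _)
  rw [Int.ediv_eq_iff_of_pos (by omega)]
  generalize (v + j) / (m + 1) = q at *
  generalize (v + l) / (m + 1) = a at *
  have hl₀ : 0 ≤ l ∧ l ≤ m := by omega
  have h₁ : q < a + 2 := lt_of_mul_lt_mul_right (a := m + 1) (by linarith) (by omega)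
  have h₂ : a < q + 2 := lt_of_mul_lt_mul_right (a := m + 1) (by linarith) (by omega)
  obtain h | h | h : q = a - 1 ∨ q = a ∨ q = a + 1 := by omega
  all_goals
    subst h
    ring_nf at *
    omega

theorem evenPart_sub_evenPart {m : ℕ} (v : ι → ℤ) (j : Fin (m + 1)) (k : Fin m) :
    evenPart m (v - evenPart (m + 1) v j) k = evenPart (m + 1) v (j.succAbove k) := by
  funext i
  have hl : (k : ℤ) < j ∧ ((j.succAbove k : ℕ) : ℤ) = k ∨
      (j : ℤ) ≤ k ∧ ((j.succAbove k : ℕ) : ℤ) = k + 1 := by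
    grind [Fin.succAbove]
  simpa [evenPart] using
    sub_ediv_add_ediv (by omega) (by omega) (by omega) (by omega) hl (v i)

theorem evenSplit_succ_eq_cons {m : ℕ} {v d : ι → ℤ} (hd : d ∈ evenSplit (m + 1) v) :
    evenSplit (m + 1) v = d ::ₘ evenSplit m (v - d) := by
  obtain ⟨j, hj, rfl⟩ := mem_evenSplit.1 hd
  rw [evenSplit, Fin.univ_succAbove _ ⟨j, hj⟩, Finset.cons_val, Multiset.map_cons,
    Finset.map_val, Multiset.map_map]
  congr 1
  exact Multiset.map_congr rfl fun k _ => (evenPart_sub_evenPart v ⟨j, hj⟩ k).symm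

theorem sum_evenSplit {m : ℕ} (hm : m ≠ 0) (v : ι → ℤ) : (evenSplit m v).sum = v := by
  obtain ⟨m, rfl⟩ := Nat.exists_eq_succ_of_ne_zero hm
  induction m generalizing v with
  | zero => simp [evenSplit_one]
  | succ m ih =>
    rw [evenSplit_succ_eq_cons (evenPart_mem_evenSplit m.succ.succ_pos v), Multiset.sum_cons,
      ih _ m.succ_ne_zero, add_sub_cancel]

theorem evenSplit_card_sum {m : ℕ} {v : ι → ℤ} {s : Multiset (ι → ℤ)} (hs : s ≤ evenSplit m v) :
    evenSplit s.card s.sum = s := by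
  rw [Multiset.le_iff_exists_add] at hs
  obtain ⟨t, ht⟩ := hs
  induction t using Multiset.induction_on generalizing m v with
  | empty =>
    obtain rfl : s = evenSplit m v := by simpa using ht.symm
    obtain rfl | hm := eq_or_ne m 0
    · rfl
    · rw [card_evenSplit, sum_evenSplit hm]
  | cons d t ih =>
    rw [Multiset.add_cons] at ht
    obtain _ | m := m
    · exact absurd ht (Multiset.zero_ne_cons)
    · rw [evenSplit_succ_eq_cons (ht ▸ Multiset.mem_cons_self d _)] at ht
      exact ih ((Multiset.cons_inj_right d).1 ht)

end EvenSplit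

section Linf

variable {n : ℕ}

theorem natAbs_le_linf (v : Fin n → ℤ) (i : Fin n) : (v i).natAbs ≤ linf v :=
  Finset.le_sup (f := fun i => (v i).natAbs) (Finset.mem_univ i)

theorem linf_le_iff {v : Fin n → ℤ} {m : ℕ} : linf v ≤ m ↔ ∀ i, (v i).natAbs ≤ m := by
  simp [linf]

theorem exists_natAbs_eq_linf {v : Fin n → ℤ} (hv : linf v ≠ 0) :
    ∃ i, (v i).natAbs = linf v := by
  have : Nonempty (Fin n) := by
    by_contra h
    rw [not_nonempty_iff] at h
    exact hv (by simp [linf])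
  obtain ⟨i, -, hi⟩ :=
    Finset.exists_mem_eq_sup Finset.univ Finset.univ_nonempty fun i => (v i).natAbs
  exact ⟨i, hi.symm⟩

theorem linf_eq_of_forall_le {v : Fin n → ℤ} {m : ℕ} (hle : ∀ i, (v i).natAbs ≤ m) {i : Fin n}
    (hi : (v i).natAbs = m) : linf v = m :=
  le_antisymm (linf_le_iff.2 hle) (hi ▸ natAbs_le_linf v i)

theorem linf_neg (v : Fin n → ℤ) : linf (-v) = linf v := by
  simp [linf]

theorem linf_sub_comm (x y : Fin n → ℤ) : linf (x - y) = linf (y - x) := by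
  rw [← neg_sub, linf_neg]

theorem finite_setOf_linf_sub_le (x : Fin n → ℤ) (r : ℕ) :
    {z : Fin n → ℤ | linf (x - z) ≤ r}.Finite := by
  refine (Set.finite_Icc (fun i => x i - r) fun i => x i + r).subset fun z hz => ?_
  have hz' : ∀ i, (x i - z i).natAbs ≤ r := linf_le_iff.1 hz
  exact ⟨fun i => by grind, fun i => by grind⟩

theorem ediv_eq_ite {w m : ℤ} (h₁ : -m ≤ w) (h₂ : w < 2 * m) :
    w / m = if m ≤ w then 1 else if w < 0 then -1 else 0 := by
  rw [Int.ediv_eq_iff_of_pos (by omega)]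
  split_ifs <;> omega

theorem evenPart_apply_eq_ite {v : Fin n → ℤ} {m j : ℕ} (hv : linf v ≤ m) (hj : j < m)
    (i : Fin n) : evenPart m v j i = if m ≤ v i + j then 1 else if v i + j < 0 then -1 else 0 := by
  have := linf_le_iff.1 hv i
  exact ediv_eq_ite (by omega) (by omega)

theorem linf_sub_evenPart {v : Fin n → ℤ} {m j M : ℕ} (hv : linf v = m + 1) (hM : m + 1 ≤ M)
    (hj : j ≤ m) (hM' : M ≤ m + 1 + j) : linf (v - evenPart M v j) = m := by
  obtain ⟨i, hi⟩ := exists_natAbs_eq_linf (v := v) (by omega)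
  refine linf_eq_of_forall_le (fun k => ?_) (i := i) ?_
  · have := natAbs_le_linf v k
    rw [Pi.sub_apply, evenPart_apply_eq_ite (by omega) (by omega)]
    split_ifs <;> omega
  · rw [Pi.sub_apply, evenPart_apply_eq_ite (by omega) (by omega)]
    split_ifs <;> omega

theorem evenPart_add_evenPart_sub {v : Fin n → ℤ} {m c : ℕ} (hv : linf v = m + 1) (hc : c < m) :
    evenPart (m + 2) v (c + 1) + evenPart m (v - evenPart (m + 2) v (c + 1)) c =
      evenPart (m + 1) v c + evenPart (m + 1) v (c + 1) := by
  have hsub : linf (v - evenPart (m + 2) v (c + 1)) = m :=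
    linf_sub_evenPart hv (by omega) (by omega) (by omega)
  funext i
  simp only [Pi.add_apply]
  rw [evenPart_apply_eq_ite hsub.le hc, evenPart_apply_eq_ite hv.le (by omega),
    evenPart_apply_eq_ite hv.le (by omega), Pi.sub_apply,
    evenPart_apply_eq_ite (by omega) (by omega)]
  have := natAbs_le_linf v i
  split_ifs <;> omega

theorem linf_sub_of_mem_evenSplit {v d : Fin n → ℤ} {m : ℕ} (hv : linf v = m + 1)
    (hd : d ∈ evenSplit (m + 1) v) : linf (v - d) = m := by
  obtain ⟨j, hj, rfl⟩ := mem_evenSplit.1 hd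
  exact linf_sub_evenPart hv le_rfl (by omega) (by omega)

theorem sum_evenSplit_of_linf_eq {v : Fin n → ℤ} {m : ℕ} (hv : linf v = m) :
    (evenSplit m v).sum = v := by
  obtain rfl | hm := eq_or_ne m 0
  · have hzero : v = 0 := by simpa [linf, funext_iff] using hv
    rw [hzero, evenSplit_zero, Multiset.sum_zero]
  · exact sum_evenSplit hm v

theorem linf_sum_of_le_evenSplit {v : Fin n → ℤ} {m : ℕ} (hv : linf v = m)
    {s : Multiset (Fin n → ℤ)} (hs : s ≤ evenSplit m v) : linf s.sum = s.card := by
  rw [Multiset.le_iff_exists_add] at hs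
  obtain ⟨t, ht⟩ := hs
  induction t using Multiset.induction_on generalizing m v with
  | empty =>
    obtain rfl : s = evenSplit m v := by simpa using ht.symm
    rw [card_evenSplit, sum_evenSplit_of_linf_eq hv, hv]
  | cons d t ih =>
    rw [Multiset.add_cons] at ht
    obtain _ | m := m
    · exact absurd ht (Multiset.zero_ne_cons)
    · have hd : d ∈ evenSplit (m + 1) v := ht ▸ Multiset.mem_cons_self d _
      rw [evenSplit_succ_eq_cons hd] at ht
      exact ih (linf_sub_of_mem_evenSplit hv hd) ((Multiset.cons_inj_right d).1 ht)

theorem avgDown_add (x v : Fin n → ℤ) : avgDown x (x + v) = x + evenPart 2 v 0 := by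
  funext i
  have h := Rat.floor_intCast_div_natCast (x i + (x i + v i)) 2
  push_cast at h
  simp only [avgDown, evenPart, Pi.add_apply, Int.cast_add, h]
  omega

theorem avgUp_add (x v : Fin n → ℤ) : avgUp x (x + v) = x + evenPart 2 v 1 := by
  funext i
  have h := Rat.ceil_intCast_div_natCast (x i + (x i + v i)) 2
  push_cast at h
  simp only [avgUp, evenPart, Pi.add_apply, Int.cast_add, h]
  omega

end Linf

section DMCSet

variable {n : ℕ} {S : Set (Fin n → ℤ)} {x v : Fin n → ℤ} {m : ℕ}

theorem DMCSet.add_evenPart_two_mem (hS : DMCSet S) (hx : x ∈ S) (hxv : x + v ∈ S)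
    (hv : 2 ≤ linf v) {j : ℕ} (hj : j < 2) : x + evenPart 2 v j ∈ S := by
  obtain ⟨hup, hdown⟩ := hS hx hxv (by simpa [sub_add_cancel_left, linf_neg] using hv)
  rw [avgUp_add] at hup
  rw [avgDown_add] at hdown
  interval_cases j <;> assumption

/-- `S` is closed under even splits of the difference of two points at distance `m`: adding the
sum of any of the parts to the first point leads to a point of `S`. Discrete midpoint convex sets
have this property for every `m`. -/
def SplitClosed (S : Set (Fin n → ℤ)) (m : ℕ) : Prop :=
  ∀ ⦃x v⦄, linf v = m → x ∈ S → x + v ∈ S → ∀ s ≤ evenSplit m v, x + s.sum ∈ S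

theorem SplitClosed.add_mem (h : SplitClosed S m) (hv : linf v = m) (hx : x ∈ S)
    (hxv : x + v ∈ S) {d : Fin n → ℤ} (hd : d ∈ evenSplit m v) : x + d ∈ S := by
  simpa using h hv hx hxv {d} (Multiset.singleton_le.2 hd)

theorem SplitClosed.add_mem_of_add_add_mem (h : SplitClosed S 2) (hv : linf v = m) (hx : x ∈ S)
    {d e : Fin n → ℤ} (hde : {d, e} ≤ evenSplit m v) (hmem : x + (d + e) ∈ S) : x + e ∈ S := by
  have hlinf : linf (d + e) = 2 := by simpa using linf_sum_of_le_evenSplit hv hde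
  have hsplit : evenSplit 2 (d + e) = {d, e} := by simpa using evenSplit_card_sum hde
  exact h.add_mem hlinf hx hmem (by simp [hsplit])

theorem SplitClosed.of_forall_add_mem (ih : SplitClosed S m)
    (h : ∀ ⦃x v⦄, linf v = m + 1 → x ∈ S → x + v ∈ S → ∀ d ∈ evenSplit (m + 1) v, x + d ∈ S) :
    SplitClosed S (m + 1) := by
  intro x v hv hx hxv s hs
  induction s using Multiset.induction_on with
  | empty => simpa using hx
  | cons d s _ =>
    have hd : d ∈ evenSplit (m + 1) v := Multiset.mem_of_le hs (Multiset.mem_cons_self d s)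
    rw [evenSplit_succ_eq_cons hd, Multiset.cons_le_cons_iff] at hs
    rw [Multiset.sum_cons, ← add_assoc]
    exact ih (linf_sub_of_mem_evenSplit hv hd) (h hv hx hxv d hd) (by simpa using hxv) s hs

theorem DMCSet.add_evenPart_mem_of_even (hS : DMCSet S) {p : ℕ} (hp : p ≠ 0)
    (ih : SplitClosed S p) (hv : linf v = 2 * p) (hx : x ∈ S) (hxv : x + v ∈ S) :
    x + evenPart (2 * p) v 0 ∈ S := by
  have hmid : x + evenPart 2 v 0 ∈ S := hS.add_evenPart_two_mem hx hxv (by omega) two_pos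
  obtain ⟨i, hi⟩ := exists_natAbs_eq_linf (v := v) (by omega)
  have hlinf : linf (evenPart 2 v 0) = p := by
    refine linf_eq_of_forall_le (fun k => ?_) (i := i) ?_
    · have := natAbs_le_linf v k
      simp only [evenPart]
      omega
    · simp only [evenPart]
      omega
  have := ih.add_mem hlinf hx hmid (evenPart_mem_evenSplit (j := 0) (by omega) _)
  rwa [evenPart_evenPart _ _ _ _ _ two_ne_zero] at this

theorem DMCSet.exists_add_evenPart_mem_of_odd (hS : DMCSet S) {p : ℕ} (hp : p ≠ 0)
    (ih : SplitClosed S (p + 1)) (hv : linf v = 2 * p + 1) (hx : x ∈ S) (hxv : x + v ∈ S) :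
    ∃ j, 0 < j ∧ j ≤ 2 * p ∧ x + evenPart (2 * p + 2) v j ∈ S := by
  obtain ⟨i, hi⟩ := exists_natAbs_eq_linf (v := v) (by omega)
  -- The midpoint must be rounded away from `x` at the coordinate attaining the norm.
  obtain ⟨j, hj, hij⟩ : ∃ j < 2, (evenPart 2 v j i).natAbs = p + 1 := by
    obtain hpos | hneg : v i = 2 * p + 1 ∨ v i = -(2 * p + 1) := by omega
    · exact ⟨1, one_lt_two, by simp only [evenPart]; omega⟩
    · exact ⟨0, two_pos, by simp only [evenPart]; omega⟩
  have hlinf : linf (evenPart 2 v j) = p + 1 := by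
    refine linf_eq_of_forall_le (fun k => ?_) hij
    have := natAbs_le_linf v k
    simp only [evenPart]
    omega
  have hmid : x + evenPart 2 v j ∈ S := hS.add_evenPart_two_mem hx hxv (by omega) hj
  have hpart := ih.add_mem hlinf hx hmid (evenPart_mem_evenSplit (j := 1 - j) (by omega) _)
  rw [evenPart_evenPart _ _ _ _ _ two_ne_zero] at hpart
  exact ⟨j + 2 * (1 - j), by omega, by omega, hpart⟩

/-- The given point uses a part of the `(m + 2)`-split, which is not a part of `v`; but together
with a suitable part of the remainder it makes up two genuine parts of `v`. -/
theorem SplitClosed.add_evenPart_mem (ih : ∀ k ≤ m, SplitClosed S k) (hm : 2 ≤ m)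
    (hv : linf v = m + 1) (hx : x ∈ S) (hxv : x + v ∈ S) {j : ℕ} (hj : j < m)
    (hmem : x + evenPart (m + 2) v (j + 1) ∈ S) : x + evenPart (m + 1) v (j + 1) ∈ S := by
  have hsub : linf (v - evenPart (m + 2) v (j + 1)) = m :=
    linf_sub_evenPart hv (by omega) (by omega) (by omega)
  have hpair := (ih m le_rfl).add_mem hsub hmem (by simpa using hxv) (evenPart_mem_evenSplit hj _)
  rw [add_assoc, evenPart_add_evenPart_sub hv hj] at hpair
  exact (ih 2 hm).add_mem_of_add_add_mem hv hx
    (pair_le_evenSplit (by omega) (by omega) (by omega) v) hpair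

theorem DMCSet.exists_add_mem (hS : DMCSet S) (ih : ∀ k ≤ m, SplitClosed S k) (hm : 2 ≤ m)
    (hv : linf v = m + 1) (hx : x ∈ S) (hxv : x + v ∈ S) :
    ∃ d ∈ evenSplit (m + 1) v, x + d ∈ S := by
  obtain ⟨p, hp | hp⟩ := Nat.even_or_odd' (m + 1)
  · have hmem := hS.add_evenPart_mem_of_even (by omega) (ih p (by omega)) (hv.trans hp) hx hxv
    rw [← hp] at hmem
    exact ⟨_, evenPart_mem_evenSplit m.succ_pos v, hmem⟩
  · obtain rfl : m = 2 * p := by omega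
    obtain ⟨j, hj, hjm, hmem⟩ :=
      hS.exists_add_evenPart_mem_of_odd (by omega) (ih (p + 1) (by omega)) hv hx hxv
    obtain ⟨j, rfl⟩ := Nat.exists_eq_add_one_of_ne_zero hj.ne'
    exact ⟨_, evenPart_mem_evenSplit (by omega) v,
      SplitClosed.add_evenPart_mem ih hm hv hx hxv hjm hmem⟩

theorem DMCSet.add_mem_of_mem_evenSplit (hS : DMCSet S) (ih : ∀ k ≤ m, SplitClosed S k)
    (hv : linf v = m + 1) (hx : x ∈ S) (hxv : x + v ∈ S) {e : Fin n → ℤ}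
    (he : e ∈ evenSplit (m + 1) v) : x + e ∈ S := by
  obtain rfl | rfl | hm : m = 0 ∨ m = 1 ∨ 2 ≤ m := by omega
  · obtain rfl : e = v := by simpa [evenSplit_one] using he
    exact hxv
  · obtain ⟨j, hj, rfl⟩ := mem_evenSplit.1 he
    exact hS.add_evenPart_two_mem hx hxv hv.ge hj
  · obtain ⟨d, hd, hxd⟩ := hS.exists_add_mem ih hm hv hx hxv
    have hcons := evenSplit_succ_eq_cons hd
    obtain rfl | he' := Multiset.mem_cons.1 (hcons ▸ he)
    · exact hxd
    · have hde : x + d + e ∈ S :=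
        (ih m le_rfl).add_mem (linf_sub_of_mem_evenSplit hv hd) hxd (by simpa using hxv) he'
      have hle : {d, e} ≤ evenSplit (m + 1) v := by
        rw [hcons]
        exact Multiset.cons_le_cons d (Multiset.singleton_le.2 he')
      exact (ih 2 hm).add_mem_of_add_add_mem hv hx hle (by rwa [← add_assoc])

theorem DMCSet.splitClosed (hS : DMCSet S) (m : ℕ) : SplitClosed S m := by
  induction m using Nat.strong_induction_on with
  | _ m ih =>
    obtain _ | m := m
    · intro x v _ hx _ s hs
      obtain rfl : s = 0 := by simpa [evenSplit_zero] using hs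
      simpa using hx
    · have ih' : ∀ k ≤ m, SplitClosed S k := fun k hk => ih k (by omega)
      exact (ih' m le_rfl).of_forall_add_mem fun x v hv hx hxv _ =>
        hS.add_mem_of_mem_evenSplit ih' hv hx hxv

end DMCSet

section Supermodular

variable {β M : Type*} [AddCommMonoid M] [PartialOrder M] [IsOrderedCancelAddMonoid M]

theorem add_le_add_of_exchange {a b c d s t : WithTop M} (hs : s ≠ ⊤) (ht : t ≠ ⊤)
    (h₁ : a + s ≤ c + t) (h₂ : t + b ≤ s + d) : a + b ≤ c + d := by
  refine WithTop.le_of_add_le_add_left (WithTop.add_ne_top.2 ⟨hs, ht⟩) ?_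
  calc s + t + (a + b) = a + s + (t + b) := by abel
    _ ≤ c + t + (s + d) := add_le_add h₁ h₂
    _ = s + t + (c + d) := by abel

variable {g : Multiset β → WithTop M} {r : Multiset β}

theorem add_cons_le_of_add_cons_cons_le (hfin : ∀ u ≤ r, g u ≠ ⊤)
    (hloc : ∀ a b u, a ::ₘ b ::ₘ u ≤ r → g (a ::ₘ u) + g (b ::ₘ u) ≤ g u + g (a ::ₘ b ::ₘ u))
    (a : β) (s t : Multiset β) (hr : a ::ₘ (s + t) ≤ r) :
    g (s + t) + g (a ::ₘ t) ≤ g t + g (a ::ₘ (s + t)) := by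
  induction s using Multiset.induction_on with
  | empty => simp
  | cons b s ih =>
    rw [Multiset.cons_add] at hr ⊢
    have hr' : a ::ₘ (s + t) ≤ r := (Multiset.cons_le_cons a (Multiset.le_cons_self _ b)).trans hr
    rw [add_comm]
    exact add_le_add_of_exchange (hfin _ ((Multiset.le_cons_self _ a).trans hr')) (hfin _ hr')
      (by rw [add_comm]; exact ih hr') (hloc a b _ hr)

theorem add_le_of_add_cons_cons_le (hfin : ∀ u ≤ r, g u ≠ ⊤)
    (hloc : ∀ a b u, a ::ₘ b ::ₘ u ≤ r → g (a ::ₘ u) + g (b ::ₘ u) ≤ g u + g (a ::ₘ b ::ₘ u))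
    (s t : Multiset β) (hr : s + t ≤ r) : g s + g t ≤ g 0 + g (s + t) := by
  induction t using Multiset.induction_on with
  | empty => simp [add_comm]
  | cons a t ih =>
    rw [Multiset.add_cons] at hr ⊢
    have hr' : s + t ≤ r := (Multiset.le_cons_self _ a).trans hr
    exact add_le_add_of_exchange (hfin _ ((Multiset.le_add_left t s).trans hr')) (hfin _ hr')
      (ih hr') (add_cons_le_of_add_cons_cons_le hfin hloc a s t hr)

end Supermodular

section Parallelogram

variable {n : ℕ} {f : (Fin n → ℤ) → WithTop ℝ} {x y v : Fin n → ℤ} {m : ℕ}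

theorem mem_effDom_of_add_le {z w : Fin n → ℤ} (hx : x ∈ effDom f) (hy : y ∈ effDom f)
    (h : f z + f w ≤ f x + f y) : z ∈ effDom f ∧ w ∈ effDom f :=
  WithTop.add_ne_top.1 (ne_top_of_le_ne_top (WithTop.add_ne_top.2 ⟨hx, hy⟩) h)

theorem GloballyDMC.locallyDMC (hf : GloballyDMC f) : LocallyDMC f :=
  ⟨fun x hx y hy hxy => mem_effDom_of_add_le hx hy (hf x y hxy), fun x y hxy => hf x y hxy.ge⟩

theorem LocallyDMC.add_le_of_pair_le_evenSplit (hf : LocallyDMC f) (hv : linf v = m)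
    {d e : Fin n → ℤ} (hde : {d, e} ≤ evenSplit m v) (x : Fin n → ℤ) :
    f (x + d) + f (x + e) ≤ f x + f (x + (d + e)) := by
  have hlinf : linf (d + e) = 2 := by simpa using linf_sum_of_le_evenSplit hv hde
  have hsplit : evenSplit 2 (d + e) = {d, e} := by simpa using evenSplit_card_sum hde
  have hpair : DMCPair f x (x + (d + e)) :=
    hf.2 _ _ (by rwa [sub_add_cancel_left, linf_neg])
  rw [DMCPair, avgUp_add, avgDown_add, add_comm] at hpair
  have hsum := congrArg (fun s => (s.map fun w => f (x + w)).sum) hsplit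
  simp only [evenSplit_two, Multiset.insert_eq_cons, Multiset.map_cons, Multiset.map_singleton,
    Multiset.sum_cons, Multiset.sum_singleton] at hsum
  exact hsum ▸ hpair

theorem LocallyDMC.parallelogram (hf : LocallyDMC f) (hx : x ∈ effDom f) (hy : y ∈ effDom f)
    (hm : linf (y - x) = m) {s : Multiset (Fin n → ℤ)} (hs : s ≤ evenSplit m (y - x)) :
    f (x + s.sum) + f (y - s.sum) ≤ f x + f y := by
  have hfin : ∀ u ≤ evenSplit m (y - x), f (x + u.sum) ≠ ⊤ :=
    hf.1.splitClosed m hm hx (by simpa using hy)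
  have hloc : ∀ d e u, d ::ₘ e ::ₘ u ≤ evenSplit m (y - x) →
      f (x + (d ::ₘ u).sum) + f (x + (e ::ₘ u).sum) ≤
        f (x + u.sum) + f (x + (d ::ₘ e ::ₘ u).sum) := by
    intro d e u hu
    have hpair : {d, e} ≤ evenSplit m (y - x) :=
      (Multiset.cons_le_cons d (Multiset.cons_le_cons e u.zero_le)).trans hu
    have := hf.add_le_of_pair_le_evenSplit hm hpair (x + u.sum)
    simp only [Multiset.sum_cons]
    convert this using 3 <;> abel
  obtain ⟨t, ht⟩ := Multiset.le_iff_exists_add.1 hs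
  have hsum : s.sum + t.sum = y - x := by
    rw [← Multiset.sum_add, ← ht, sum_evenSplit_of_linf_eq hm]
  have hsuper := add_le_of_add_cons_cons_le hfin hloc s t ht.ge
  rw [Multiset.sum_zero, add_zero, Multiset.sum_add, hsum, add_sub_cancel] at hsuper
  rwa [show y - s.sum = x + t.sum by rw [sub_eq_iff_eq_add, add_assoc, add_comm t.sum, hsum]; abel]

end Parallelogram

section Proximity

variable {n : ℕ} {v : Fin n → ℤ} {m : ℕ}

theorem sum_evenPart_lt (hv : linf v = m) {j : ℕ} (hj : j < m) :
    ∑ i, evenPart m v j i < ∑ i, evenPart m v 0 i + n := by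
  obtain ⟨i, hi⟩ := exists_natAbs_eq_linf (v := v) (by omega)
  have hle : ∀ k ∈ Finset.univ, evenPart m v j k ≤ evenPart m v 0 k + 1 :=
    fun k _ => evenPart_le_add_one hj v k
  have hlt : evenPart m v j i < evenPart m v 0 i + 1 := by
    rw [evenPart_apply_eq_ite hv.le hj, evenPart_apply_eq_ite hv.le (by omega)]
    split_ifs <;> omega
  simpa [Finset.sum_add_distrib] using Finset.sum_lt_sum hle ⟨i, Finset.mem_univ i, hlt⟩

/-- The parts form a chain, so they are told apart by their coordinate sums. -/
theorem card_toFinset_evenSplit_le (hv : linf v = m) : (evenSplit m v).toFinset.card ≤ n := by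
  set a := ∑ i, evenPart m v 0 i
  have hmaps : Set.MapsTo (fun d => ∑ i, d i) ((evenSplit m v).toFinset : Set (Fin n → ℤ))
      (Finset.Ico a (a + n)) := by
    intro d hd
    obtain ⟨j, hj, rfl⟩ := mem_evenSplit.1 (Multiset.mem_toFinset.1 hd)
    rw [Finset.coe_Ico]
    exact ⟨Finset.sum_le_sum fun i _ => evenPart_mono m v j.zero_le i, sum_evenPart_lt hv hj⟩
  have hinj : Set.InjOn (fun d => ∑ i, d i) ((evenSplit m v).toFinset : Set (Fin n → ℤ)) := by
    intro d hd e he hde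
    obtain ⟨j, -, rfl⟩ := mem_evenSplit.1 (Multiset.mem_toFinset.1 hd)
    obtain ⟨k, -, rfl⟩ := mem_evenSplit.1 (Multiset.mem_toFinset.1 he)
    have heq : ∀ {j k : ℕ}, j ≤ k → ∑ i, evenPart m v j i = ∑ i, evenPart m v k i →
        evenPart m v j = evenPart m v k := fun hjk hsum => funext fun i =>
      (Finset.sum_eq_sum_iff_of_le fun i _ => evenPart_mono m v hjk i).1 hsum i (Finset.mem_univ i)
    obtain hjk | hkj := le_total j k
    · exact heq hjk hde
    · exact (heq hkj hde.symm).symm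
  simpa using Finset.card_le_card_of_injOn _ hmaps hinj

theorem exists_replicate_le_evenSplit (hv : linf v = m) {α : ℕ} (hm : n * (α - 1) < m) :
    ∃ d, Multiset.replicate α d ≤ evenSplit m v := by
  by_contra! hcon
  have hcount : ∀ d ∈ (evenSplit m v).toFinset, (evenSplit m v).count d ≤ α - 1 := fun d _ =>
    Nat.le_sub_one_of_lt <| not_le.1 fun h => hcon d (Multiset.le_count_iff_replicate_le.1 h)
  refine hm.not_ge ?_
  calc m = ∑ d ∈ (evenSplit m v).toFinset, (evenSplit m v).count d := by
        rw [Multiset.toFinset_sum_count_eq, card_evenSplit]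
    _ ≤ (evenSplit m v).toFinset.card * (α - 1) := by
        simpa using Finset.sum_le_card_nsmul _ _ _ hcount
    _ ≤ n * (α - 1) := Nat.mul_le_mul_right _ (card_toFinset_evenSplit_le hv)

variable {f : (Fin n → ℤ) → WithTop ℝ} {α : ℕ} {x y : Fin n → ℤ}

theorem LocallyDMC.exists_linf_sub_lt (hf : LocallyDMC f) (hα : 0 < α) (hx : x ∈ effDom f)
    (hloc : ∀ d : Fin n → ℤ, (∀ i, d i = -1 ∨ d i = 0 ∨ d i = 1) → f x ≤ f (x + (α : ℤ) • d))
    (hy : y ∈ effDom f) (hfar : n * (α - 1) < linf (y - x)) :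
    ∃ z ∈ effDom f, f z ≤ f y ∧ linf (z - x) < linf (y - x) := by
  obtain ⟨d, hd⟩ := exists_replicate_le_evenSplit rfl hfar
  have hmem : d ∈ evenSplit (linf (y - x)) (y - x) :=
    Multiset.mem_of_le hd (Multiset.mem_replicate.2 ⟨hα.ne', rfl⟩)
  have hunit : ∀ i, d i = -1 ∨ d i = 0 ∨ d i = 1 := by
    obtain ⟨j, hj, rfl⟩ := mem_evenSplit.1 hmem
    intro i
    rw [evenPart_apply_eq_ite le_rfl hj]
    split_ifs <;> simp
  have hpar : f (x + (α : ℤ) • d) + f (y - (α : ℤ) • d) ≤ f x + f y := by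
    simpa using hf.parallelogram hx hy rfl hd
  refine ⟨y - (α : ℤ) • d, (mem_effDom_of_add_le hx hy hpar).2, ?_, ?_⟩
  · exact WithTop.le_of_add_le_add_left hx ((add_le_add_left (hloc d hunit) _).trans hpar)
  · obtain ⟨t, ht⟩ := Multiset.le_iff_exists_add.1 hd
    have htsum : y - (α : ℤ) • d - x = t.sum := by
      have := sum_evenSplit_of_linf_eq (v := y - x) rfl
      rw [ht, Multiset.sum_add, Multiset.sum_replicate] at this
      rw [sub_right_comm, ← this, natCast_zsmul, add_sub_cancel_left]
    have htcard := congrArg Multiset.card ht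
    rw [card_evenSplit, Multiset.card_add, Multiset.card_replicate] at htcard
    rw [htsum, linf_sum_of_le_evenSplit rfl (ht ▸ Multiset.le_add_left t _)]
    omega

theorem LocallyDMC.exists_le_near (hf : LocallyDMC f) (hα : 0 < α) (hx : x ∈ effDom f)
    (hloc : ∀ d : Fin n → ℤ, (∀ i, d i = -1 ∨ d i = 0 ∨ d i = 1) → f x ≤ f (x + (α : ℤ) • d))
    (hy : y ∈ effDom f) : ∃ z, linf (x - z) ≤ n * (α - 1) ∧ f z ≤ f y := by
  induction hk : linf (y - x) using Nat.strong_induction_on generalizing y with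
  | _ k ih =>
    by_cases hnear : linf (y - x) ≤ n * (α - 1)
    · exact ⟨y, by rwa [linf_sub_comm], le_rfl⟩
    · obtain ⟨w, hw, hwy, hlt⟩ := hf.exists_linf_sub_lt hα hx hloc hy (not_le.1 hnear)
      obtain ⟨z, hz, hzw⟩ := ih _ (hk ▸ hlt) hw rfl
      exact ⟨z, hz, hzw.trans hwy⟩

end Proximity

/-- Proximity theorem: if `x^α ∈ dom f` is an `α`-local minimizer of a
(globally or locally) discrete midpoint convex function `f`, then there is a
global minimizer `x*` of `f` with `‖x^α − x*‖∞ ≤ n(α − 1)`. -/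
theorem dmc_proximity {n : ℕ} (f : (Fin n → ℤ) → WithTop ℝ)
    (hdmc : GloballyDMC f ∨ LocallyDMC f)
    (α : ℕ) (hα : 0 < α) (xα : Fin n → ℤ) (hxα : xα ∈ effDom f)
    (hloc : ∀ d : Fin n → ℤ, (∀ i, d i = -1 ∨ d i = 0 ∨ d i = 1) →
      f xα ≤ f (xα + (α : ℤ) • d)) :
    ∃ xstar : Fin n → ℤ, (∀ z : Fin n → ℤ, f xstar ≤ f z) ∧
      linf (xα - xstar) ≤ n * (α - 1) := by
  have hf : LocallyDMC f := hdmc.elim GloballyDMC.locallyDMC id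
  obtain ⟨xstar, hnear, hmin⟩ := Set.exists_min_image _ f
    (finite_setOf_linf_sub_le xα (n * (α - 1))) ⟨xα, by simp [linf]⟩
  refine ⟨xstar, fun z => ?_, hnear⟩
  by_cases hz : z ∈ effDom f
  · obtain ⟨w, hw, hwz⟩ := hf.exists_le_near hα hxα hloc hz
    exact (hmin w hw).trans hwz
  · exact le_top.trans_eq (not_not.1 hz).symm
end

section
/- Let α be a positive integer, let y ∈ ℤⁿ with m := ‖y‖∞ = n(α − 1) + 1, and define A_k = {i : y_i ≥ m+1−k} and B_k = {i : y_i ≤ −k} for k = 1,…,m. Then there exists k₀ ∈ {1,…, m − α + 1} such that (A_{k₀}, B_{k₀}) = (A_{k₀+j}, B_{k₀+j}) for all j = 1,…, α − 1. -/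
/-!
Passing from `k` to `k + 1`, the set `A_k` gains the `i` with `y_i = m - k` and `B_k` loses the `i`
with `y_i = -k`. Either way `k ≡ -y_i (mod m)`, so each coordinate is responsible for a change at
no more than one `k ∈ {1, …, m - 1}`, and a coordinate divisible by `m`, such as `±m`, at none.
Hence one of the `n` consecutive blocks of `α - 1` integers filling `{1, …, m - 1}` contains none of
the at most `n - 1` values of `k` at which something changes.
-/

theorem exists_linf_dvd {n : ℕ} (hn : 0 < n) (z : Fin n → ℤ) : ∃ i, (linf z : ℤ) ∣ z i := by
  obtain ⟨i, -, hi⟩ := Finset.exists_mem_eq_sup Finset.univ ⟨⟨0, hn⟩, Finset.mem_univ _⟩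
    fun i => (z i).natAbs
  exact ⟨i, Int.natCast_dvd.mpr hi.dvd⟩

theorem exists_disjoint_Ioc_of_card_lt {s : Finset ℕ} {n : ℕ} (hs : s.card < n) (d : ℕ) :
    ∃ a, a + d ≤ n * d ∧ Disjoint s (Finset.Ioc a (a + d)) := by
  have hcard : (s.image fun k => (k - 1) / d).card < (Finset.range n).card := by
    simpa only [Finset.card_range] using Finset.card_image_le.trans_lt hs
  obtain ⟨b, hb, hbs⟩ := Finset.exists_mem_notMem_of_card_lt_card hcard
  refine ⟨b * d, ?_, Finset.disjoint_left.mpr fun k hk hkb => hbs ?_⟩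
  · rw [← Nat.succ_mul]
    exact Nat.mul_le_mul_right d (Finset.mem_range.mp hb)
  · rw [Finset.mem_Ioc] at hkb
    have hkd : (k - 1) / d = b := Nat.div_eq_of_lt_le (by omega) (by rw [Nat.succ_mul]; omega)
    exact Finset.mem_image.mpr ⟨k, hk, hkd⟩

theorem apply_add_eq_of_forall_succ_eq {β : Type*} {f : ℕ → β} {a d : ℕ}
    (hf : ∀ k ∈ Finset.Ico a (a + d), f (k + 1) = f k) {j : ℕ} (hj : j ≤ d) :
    f (a + j) = f a := by
  induction j with
  | zero => rfl
  | succ j ih =>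
    have hmem : a + j ∈ Finset.Ico a (a + d) := Finset.mem_Ico.mpr ⟨by omega, by omega⟩
    exact (hf _ hmem).trans (ih (by omega))

section Layers

variable {ι : Type*} [Fintype ι]

/-- The sets `A_k = {i : y_i ≥ m + 1 - k}` of the canonical decomposition, increasing in `k`. The
parameter `m` need not be the norm of `y`. -/
def plusLayer (y : ι → ℤ) (m k : ℕ) : Finset ι :=
  Finset.univ.filter fun i => (m : ℤ) + 1 - (k : ℤ) ≤ y i

/-- The sets `B_k = {i : y_i ≤ -k}` of the canonical decomposition, decreasing in `k`. -/
def minusLayer (y : ι → ℤ) (k : ℕ) : Finset ι :=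
  Finset.univ.filter fun i => y i ≤ -(k : ℤ)

theorem plusLayer_succ {y : ι → ℤ} {m k : ℕ} (h : ∀ i, y i + k ≠ m) :
    plusLayer y m (k + 1) = plusLayer y m k :=
  Finset.filter_congr fun i _ => by have := h i; omega

theorem minusLayer_succ {y : ι → ℤ} {k : ℕ} (h : ∀ i, y i + k ≠ 0) :
    minusLayer y (k + 1) = minusLayer y k :=
  Finset.filter_congr fun i _ => by have := h i; omega

theorem exists_Ioc_forall_not_dvd_add {y : ι → ℤ} {m d : ℕ} (hy : ∃ i, (m : ℤ) ∣ y i)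
    (hm : Fintype.card ι * d < m) :
    ∃ a, a + d < m ∧ ∀ k ∈ Finset.Ioc a (a + d), ∀ i, ¬ (m : ℤ) ∣ y i + k := by
  classical
  let r : ι → ℕ := fun i => (-(y i : ZMod m)).val
  have hr₀ : 0 ∈ Finset.univ.image r := by
    obtain ⟨i, hi⟩ := hy
    have hyi : (y i : ZMod m) = 0 := (ZMod.intCast_zmod_eq_zero_iff_dvd _ _).mpr hi
    have hri : r i = 0 := by simp only [r, hyi, neg_zero, ZMod.val_zero]
    exact Finset.mem_image.mpr ⟨i, Finset.mem_univ i, hri⟩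
  have hcard : ((Finset.univ.image r).erase 0).card < Fintype.card ι :=
    (Finset.card_erase_lt_of_mem hr₀).trans_le Finset.card_image_le
  obtain ⟨a, had, hdisj⟩ := exists_disjoint_Ioc_of_card_lt hcard d
  refine ⟨a, had.trans_lt hm, fun k hk i hdvd => Finset.disjoint_right.mp hdisj hk ?_⟩
  rw [Finset.mem_Ioc] at hk
  have hki : (k : ZMod m) = -(y i : ZMod m) := by
    rw [eq_neg_iff_add_eq_zero, add_comm]
    exact_mod_cast (ZMod.intCast_zmod_eq_zero_iff_dvd _ _).mpr hdvd
  have hrk : r i = k := by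
    simp only [r, ← hki]
    exact ZMod.val_natCast_of_lt (by omega)
  exact Finset.mem_erase.mpr ⟨by omega, Finset.mem_image.mpr ⟨i, Finset.mem_univ i, hrk⟩⟩

theorem exists_constant_run_general {y : ι → ℤ} {m d : ℕ} (hy : ∃ i, (m : ℤ) ∣ y i)
    (hm : Fintype.card ι * d < m) :
    ∃ k₀, 1 ≤ k₀ ∧ k₀ + d ≤ m ∧ ∀ j ≤ d,
      plusLayer y m (k₀ + j) = plusLayer y m k₀ ∧ minusLayer y (k₀ + j) = minusLayer y k₀ := by
  obtain ⟨a, had, ha⟩ := exists_Ioc_forall_not_dvd_add hy hm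
  have hndvd : ∀ k ∈ Finset.Ico (a + 1) (a + 1 + d), ∀ i, ¬ (m : ℤ) ∣ y i + k := fun k hk =>
    ha k (by rw [Finset.mem_Ico] at hk; exact Finset.mem_Ioc.mpr ⟨by omega, by omega⟩)
  refine ⟨a + 1, by omega, by omega, fun j hj => ⟨?_, ?_⟩⟩
  · exact apply_add_eq_of_forall_succ_eq
      (fun k hk => plusLayer_succ fun i hi => hndvd k hk i (hi ▸ dvd_rfl)) hj
  · exact apply_add_eq_of_forall_succ_eq
      (fun k hk => minusLayer_succ fun i hi => hndvd k hk i (hi ▸ dvd_zero _)) hj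

end Layers

/-- For a positive integer `α` and `y ∈ ℤⁿ` with `m = ‖y‖∞ = n(α−1)+1`, in
the canonical decomposition with `A_k = {i : y_i ≥ m+1−k}` and
`B_k = {i : y_i ≤ −k}`, there is an index `k₀ ∈ {1,…,m−α+1}` with
`(A_{k₀}, B_{k₀}) = (A_{k₀+j}, B_{k₀+j})` for `j = 1,…,α−1`. -/
theorem exists_constant_run {n : ℕ} (hn : 0 < n) (α : ℕ) (hα : 0 < α)
    (y : Fin n → ℤ) (m : ℕ) (hm : m = linf y) (hmval : m = n * (α - 1) + 1)
    (A B : ℕ → Finset (Fin n))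
    (hA : ∀ k, A k = Finset.univ.filter fun i => (m : ℤ) + 1 - (k : ℤ) ≤ y i)
    (hB : ∀ k, B k = Finset.univ.filter fun i => y i ≤ -(k : ℤ)) :
    ∃ k₀ : ℕ, 1 ≤ k₀ ∧ k₀ ≤ m - α + 1 ∧
      ∀ j : ℕ, 1 ≤ j → j ≤ α - 1 → A (k₀ + j) = A k₀ ∧ B (k₀ + j) = B k₀ := by
  obtain ⟨k₀, hk₀, hk₀m, hrun⟩ := exists_constant_run_general (d := α - 1)
    (hm ▸ exists_linf_dvd hn y) (by rw [Fintype.card_fin]; omega)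
  exact ⟨k₀, hk₀, by omega, fun j _ hj => by
    simpa only [hA, hB, plusLayer, minusLayer] using hrun j hj⟩
end

section
/- Let Q be an n×n real symmetric matrix and f : ℤⁿ → ℝ defined by f(x) = xᵀQx. For x, y ∈ ℤⁿ, the discrete midpoint convexity inequality f(x) + f(y) ≥ f(⌈(x+y)/2⌉) + f(⌊(x+y)/2⌋) holds if and only if zᵀQz ≥ 1_Jᵀ Q 1_J, where z = x − y and J = {i : z_i is odd}. Consequently, f is locally (resp. globally) discrete midpoint convex if and only if zᵀQz ≥ 1_Jᵀ Q 1_J holds for all z ∈ ℤⁿ with ‖z‖∞ = 2 (resp. ‖z‖∞ ≥ 2), where J = {i : z_i is odd}. -/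
open Matrix Classical

/-- The real cast of an integer vector. -/
def castVec {n : ℕ} (z : Fin n → ℤ) : Fin n → ℝ := fun i => (z i : ℝ)

/-- The quadratic function `f(x) = xᵀ Q x` on `ℤⁿ`. -/
def quadFn {n : ℕ} (Q : Matrix (Fin n) (Fin n) ℝ) (x : Fin n → ℤ) : ℝ :=
  castVec x ⬝ᵥ Q.mulVec (castVec x)

/-- The real-valued function `f` satisfies discrete midpoint convexity for the
pair `(x, y)`. -/
def DMCPairR {n : ℕ} (f : (Fin n → ℤ) → ℝ) (x y : Fin n → ℤ) : Prop :=
  f (avgUp x y) + f (avgDown x y) ≤ f x + f y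

/-- A real-valued `f` is globally discrete midpoint convex (its effective
domain is all of `ℤⁿ`, which is trivially a discrete midpoint convex set). -/
def GloballyDMCR {n : ℕ} (f : (Fin n → ℤ) → ℝ) : Prop :=
  ∀ x y : Fin n → ℤ, 2 ≤ linf (x - y) → DMCPairR f x y

/-- A real-valued `f` is locally discrete midpoint convex (its effective
domain is all of `ℤⁿ`, which is trivially a discrete midpoint convex set). -/
def LocallyDMCR {n : ℕ} (f : (Fin n → ℤ) → ℝ) : Prop :=
  ∀ x y : Fin n → ℤ, linf (x - y) = 2 → DMCPairR f x y

/-- The characteristic real vector of the set of indices where `z` is odd. -/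
noncomputable def oddChar {n : ℕ} (z : Fin n → ℤ) : Fin n → ℝ :=
  fun i => if Odd (z i) then 1 else 0

/-!
The rounded midpoints `u = ⌈(x + y) / 2⌉` and `v = ⌊(x + y) / 2⌋` satisfy `u + v = x + y`, and
`u - v` is the characteristic vector of the coordinates where `x - y` is odd. The parallelogram law
for `q(a) = aᵀ Q a`, applied to `(x, y)` and to `(u, v)`, therefore gives
`2 (q x + q y - q u - q v) = q (x - y) - q (u - v)`, whose sign decides the midpoint inequality.
-/

section Parallelogram

variable {m R : Type*} [Fintype m] [NonUnitalNonAssocRing R]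

theorem dotProduct_mulVec_parallelogram (A : Matrix m m R) (a b : m → R) :
    (a + b) ⬝ᵥ A *ᵥ (a + b) + (a - b) ⬝ᵥ A *ᵥ (a - b) = 2 • (a ⬝ᵥ A *ᵥ a + b ⬝ᵥ A *ᵥ b) := by
  simp only [mulVec_add, mulVec_sub, add_dotProduct, sub_dotProduct, dotProduct_add,
    dotProduct_sub]
  abel

end Parallelogram

section IntegerVectors

variable {n : ℕ} (x y : Fin n → ℤ)

theorem avgDown_apply (i : Fin n) : avgDown x y i = (x i + y i) / 2 := by
  simpa only [avgDown, Int.cast_add, Nat.cast_ofNat] using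
    Rat.floor_intCast_div_natCast (x i + y i) 2

theorem avgUp_apply (i : Fin n) : avgUp x y i = -(-(x i + y i) / 2) := by
  simpa only [avgUp, Int.cast_add, Nat.cast_ofNat] using
    Rat.ceil_intCast_div_natCast (x i + y i) 2

theorem avgUp_add_avgDown : avgUp x y + avgDown x y = x + y := by
  funext i
  simp only [Pi.add_apply, avgUp_apply, avgDown_apply]
  omega

theorem avgUp_sub_avgDown_apply (i : Fin n) :
    (avgUp x y - avgDown x y) i = if Odd ((x - y) i) then 1 else 0 := by
  simp only [Pi.sub_apply, avgUp_apply, avgDown_apply, Int.odd_iff]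
  split_ifs <;> omega

theorem castVec_avgUp_sub_avgDown : castVec (avgUp x y - avgDown x y) = oddChar (x - y) := by
  funext i
  simp only [castVec, oddChar, avgUp_sub_avgDown_apply, Int.cast_ite, Int.cast_one, Int.cast_zero]

theorem castVec_add : castVec (x + y) = castVec x + castVec y :=
  funext fun i => Int.cast_add (x i) (y i)

theorem castVec_sub : castVec (x - y) = castVec x - castVec y :=
  funext fun i => Int.cast_sub (x i) (y i)

end IntegerVectors

section QuadraticFunction

variable {n : ℕ} (Q : Matrix (Fin n) (Fin n) ℝ)

theorem quadFn_parallelogram (x y : Fin n → ℤ) :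
    quadFn Q (x + y) + quadFn Q (x - y) = 2 * (quadFn Q x + quadFn Q y) := by
  simpa only [quadFn, castVec_add, castVec_sub, nsmul_eq_mul, Nat.cast_ofNat] using
    dotProduct_mulVec_parallelogram Q (castVec x) (castVec y)

theorem two_mul_quadFn_midpoint_gap (x y : Fin n → ℤ) :
    2 * (quadFn Q x + quadFn Q y - (quadFn Q (avgUp x y) + quadFn Q (avgDown x y))) =
      quadFn Q (x - y) - oddChar (x - y) ⬝ᵥ Q *ᵥ oddChar (x - y) := by
  have hpair := quadFn_parallelogram Q x y
  have hmid := quadFn_parallelogram Q (avgUp x y) (avgDown x y)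
  have hodd : quadFn Q (avgUp x y - avgDown x y) =
      oddChar (x - y) ⬝ᵥ Q *ᵥ oddChar (x - y) := by
    rw [quadFn, castVec_avgUp_sub_avgDown]
  rw [avgUp_add_avgDown, hodd] at hmid
  linarith

theorem dmcPairR_quadFn_iff (x y : Fin n → ℤ) :
    DMCPairR (quadFn Q) x y ↔
      oddChar (x - y) ⬝ᵥ Q *ᵥ oddChar (x - y) ≤ castVec (x - y) ⬝ᵥ Q *ᵥ castVec (x - y) := by
  rw [DMCPairR, ← sub_nonneg, ← mul_nonneg_iff_of_pos_left two_pos,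
    two_mul_quadFn_midpoint_gap, sub_nonneg, quadFn]

theorem forall_dmcPairR_quadFn_iff (p : (Fin n → ℤ) → Prop) :
    (∀ x y, p (x - y) → DMCPairR (quadFn Q) x y) ↔
      ∀ z, p z → oddChar z ⬝ᵥ Q *ᵥ oddChar z ≤ castVec z ⬝ᵥ Q *ᵥ castVec z := by
  simp only [dmcPairR_quadFn_iff]
  exact ⟨fun h z => by simpa only [sub_zero] using h z 0, fun h x y => h (x - y)⟩

end QuadraticFunction

theorem quad_dmc_characterization_general {n : ℕ} (Q : Matrix (Fin n) (Fin n) ℝ) :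
    (∀ x y : Fin n → ℤ, DMCPairR (quadFn Q) x y ↔
      oddChar (x - y) ⬝ᵥ Q.mulVec (oddChar (x - y)) ≤
        castVec (x - y) ⬝ᵥ Q.mulVec (castVec (x - y))) ∧
    (LocallyDMCR (quadFn Q) ↔
      ∀ z : Fin n → ℤ, linf z = 2 →
        oddChar z ⬝ᵥ Q.mulVec (oddChar z) ≤ castVec z ⬝ᵥ Q.mulVec (castVec z)) ∧
    (GloballyDMCR (quadFn Q) ↔
      ∀ z : Fin n → ℤ, 2 ≤ linf z →
        oddChar z ⬝ᵥ Q.mulVec (oddChar z) ≤ castVec z ⬝ᵥ Q.mulVec (castVec z)) :=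
  ⟨dmcPairR_quadFn_iff Q, forall_dmcPairR_quadFn_iff Q (linf · = 2),
    forall_dmcPairR_quadFn_iff Q (2 ≤ linf ·)⟩

/-- For a quadratic function `f(x) = xᵀ Q x` with `Q` symmetric: discrete
midpoint convexity for `(x, y)` is equivalent to `zᵀQz ≥ 1_Jᵀ Q 1_J` with
`z = x − y` and `J = {i : z_i odd}`; consequently `f` is locally (resp.
globally) discrete midpoint convex iff this inequality holds for all `z` with
`‖z‖∞ = 2` (resp. `‖z‖∞ ≥ 2`). -/
theorem quad_dmc_characterization {n : ℕ} (Q : Matrix (Fin n) (Fin n) ℝ)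
    (hQ : Q.IsSymm) :
    (∀ x y : Fin n → ℤ, DMCPairR (quadFn Q) x y ↔
      oddChar (x - y) ⬝ᵥ Q.mulVec (oddChar (x - y)) ≤
        castVec (x - y) ⬝ᵥ Q.mulVec (castVec (x - y))) ∧
    (LocallyDMCR (quadFn Q) ↔
      ∀ z : Fin n → ℤ, linf z = 2 →
        oddChar z ⬝ᵥ Q.mulVec (oddChar z) ≤ castVec z ⬝ᵥ Q.mulVec (castVec z)) ∧
    (GloballyDMCR (quadFn Q) ↔
      ∀ z : Fin n → ℤ, 2 ≤ linf z →
        oddChar z ⬝ᵥ Q.mulVec (oddChar z) ≤ castVec z ⬝ᵥ Q.mulVec (castVec z)) :=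
  quad_dmc_characterization_general Q
end
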